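/- arXiv:2401.02434 — 2 statements merged into one kernel-verified Lean document; each statement's English description precedes it below -/
import Mathlib

section
/- For every integer n > 1, S ([false, true] ++ replicate (n − 2) false ++ [true]) = (3n − 2)/(3n + 1) and S ([true, true] ++ replicate (n − 2) false ++ [true]) = (3n − 1)/(3n + 2); that is, the vertex (3n−2)/(3n+1) has 0-1 sequence 01 0⋯0 (n−2 zeros) 1 and the vertex (3n−1)/(3n+2) has 0-1 sequence 11 0⋯0 (n−2 zeros) 1 on the S-tree. -/
/-!
The vertices `01` and `11` are `3/4` and `3/5`. A `0` step adds `1` to the reciprocal of the value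
(`Sa_replicate_false`), so `n - 2` zeros lead to `3/(3n-2)` and `3/(3n-1)`, and the final `1` step
`x ↦ 1/(1+x)` gives the two claimed fractions.
-/

/-- Helper computing the S-tree value from the reversed 0-1 sequence. -/
def Sa : List Bool → ℚ
  | [] => 1/2
  | b :: t => if b then 1 / (1 + Sa t) else Sa t / (1 + Sa t)

/-- The S-tree map: `S [] = 1/2`, `S (s ++ [false]) = S s / (1 + S s)` and
`S (s ++ [true]) = 1 / (1 + S s)`. -/
def S (s : List Bool) : ℚ := Sa s.reverse

/-- Each `false` step sends `x` to `x / (1 + x)`, that is, adds `1` to the reciprocal; so `k` of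
them send `3 / c` to `3 / (c + 3k)`. -/
lemma Sa_replicate_false (t : List Bool) (c : ℚ) (hc : 0 < c) (h : Sa t = 3 / c) (k : ℕ) :
    Sa (List.replicate k false ++ t) = 3 / (c + 3 * k) := by
  induction k with
  | zero => simpa using h
  | succ k ih =>
    have h1 : 0 < c + 3 * (k : ℚ) := by positivity
    have h2 : 0 < c + 3 * ((k : ℚ) + 1) := by positivity
    simp only [List.replicate_succ, List.cons_append, Sa, ih, Bool.false_eq_true, if_false]
    push_cast
    field_simp
    ring

/-- For every integer `n > 1`, the vertex `(3n−2)/(3n+1)` of the S-tree has 0-1 sequence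
`01 0⋯0 1` (`n−2` zeros in the middle), and the vertex `(3n−1)/(3n+2)` has 0-1 sequence
`11 0⋯0 1` (`n−2` zeros in the middle). -/
theorem stree_thirds (n : ℕ) (hn : 1 < n) :
    S ([false, true] ++ List.replicate (n - 2) false ++ [true]) =
        (3 * (n : ℚ) - 2) / (3 * (n : ℚ) + 1) ∧
      S ([true, true] ++ List.replicate (n - 2) false ++ [true]) =
        (3 * (n : ℚ) - 1) / (3 * (n : ℚ) + 2) := by
  obtain ⟨k, rfl⟩ : ∃ k, n = k + 2 := ⟨n - 2, by omega⟩
  -- `Sa` reads its argument reversed, so `[true, false]` is the vertex `01`.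
  have h4 := Sa_replicate_false [true, false] 4 (by norm_num) (by norm_num [Sa]) k
  have h5 := Sa_replicate_false [true, true] 5 (by norm_num) (by norm_num [Sa]) k
  have hk : (0 : ℚ) ≤ k := k.cast_nonneg
  constructor
  · have e : S ([false, true] ++ List.replicate (k + 2 - 2) false ++ [true]) =
        1 / (1 + Sa (List.replicate k false ++ [true, false])) := by
      simp [S, Sa]
    rw [e, h4]
    push_cast
    have h1 : 4 + 3 * (k : ℚ) ≠ 0 := by positivity
    have h2 : 3 * ((k : ℚ) + 2) + 1 ≠ 0 := by positivity
    have h3 : 1 + 3 / (4 + 3 * (k : ℚ)) ≠ 0 := by positivity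
    rw [div_eq_div_iff h3 h2]
    field_simp
    ring
  · have e : S ([true, true] ++ List.replicate (k + 2 - 2) false ++ [true]) =
        1 / (1 + Sa (List.replicate k false ++ [true, true])) := by
      simp [S, Sa]
    rw [e, h5]
    push_cast
    have h1 : 5 + 3 * (k : ℚ) ≠ 0 := by positivity
    have h2 : 3 * ((k : ℚ) + 2) + 2 ≠ 0 := by positivity
    have h3 : 1 + 3 / (5 + 3 * (k : ℚ)) ≠ 0 := by positivity
    rw [div_eq_div_iff h3 h2]
    field_simp
    ring
end

section
/- Define G : List Bool → ℝ by G [] = Real.sin (Real.arctan 1) and, for any bit string s, G (s ++ [false]) = Real.sin (Real.arctan (G s)) and G (s ++ [true]) = Real.cos (Real.arctan (G s)). Then for every bit string s, G s = Real.sqrt ((S s : ℝ)). Consequently, for any reduced rational q ∈ (0,1), composing the functions sin ∘ arctan (for the digit 0) and cos ∘ arctan (for the digit 1) according to the S-tree 0-1 sequence of q², applied to cos 0 = 1, yields q. -/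
/-- Helper computing the broken-calculator value from the reversed 0-1 sequence. -/
noncomputable def Ga : List Bool → ℝ
  | [] => Real.sin (Real.arctan 1)
  | b :: t =>
      if b then Real.cos (Real.arctan (Ga t)) else Real.sin (Real.arctan (Ga t))

/-- `G [] = sin (arctan 1)` and, for any bit string `s`,
`G (s ++ [false]) = sin (arctan (G s))` and `G (s ++ [true]) = cos (arctan (G s))`. -/
noncomputable def G (s : List Bool) : ℝ := Ga s.reverse

theorem Sa_pos (t : List Bool) : 0 < Sa t := by
  induction t with
  | nil => norm_num [Sa]
  | cons b t ih => cases b <;> simp only [Sa] <;> simp <;> positivity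

theorem sin_arctan_sqrt {r : ℝ} (hr : 0 ≤ r) :
    Real.sin (Real.arctan (√r)) = √(r / (1 + r)) := by
  rw [Real.sin_arctan, Real.sq_sqrt hr, Real.sqrt_div hr]

theorem cos_arctan_sqrt {r : ℝ} (hr : 0 ≤ r) :
    Real.cos (Real.arctan (√r)) = √(1 / (1 + r)) := by
  rw [Real.cos_arctan, Real.sq_sqrt hr, Real.sqrt_div zero_le_one, Real.sqrt_one]

theorem Ga_eq_sqrt (t : List Bool) : Ga t = √(Sa t : ℝ) := by
  induction t with
  | nil =>
    have h := sin_arctan_sqrt (zero_le_one (α := ℝ))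
    rw [Real.sqrt_one] at h
    simp only [Ga, Sa, h]
    norm_num
  | cons b t ih =>
    have hr : (0 : ℝ) ≤ (Sa t : ℝ) := by exact_mod_cast (Sa_pos t).le
    cases b
    · simp [Ga, Sa, ih, sin_arctan_sqrt hr, -Real.sqrt_div']
    · simp [Ga, Sa, ih, cos_arctan_sqrt hr]

/-- The broken-calculator corollary: `G s = √(S s)` for every bit string `s`;
consequently, for any reduced rational `q ∈ (0,1)`, composing `sin ∘ arctan` (digit 0)
and `cos ∘ arctan` (digit 1) along the S-tree 0-1 sequence of `q²`, applied to
`cos 0 = 1`, yields `q`. -/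
theorem broken_calculator :
    (∀ s : List Bool, G s = Real.sqrt ((S s : ℝ))) ∧
      ∀ (q : ℚ) (s : List Bool), 0 < q → q < 1 → S s = q ^ 2 → G s = (q : ℝ) := by
  have main (s : List Bool) : G s = √(S s : ℝ) := Ga_eq_sqrt s.reverse
  refine ⟨main, fun q s hq _ hs => ?_⟩
  have hq' : (0 : ℝ) ≤ (q : ℝ) := by exact_mod_cast hq.le
  rw [main, hs, Rat.cast_pow, Real.sqrt_sq hq']
end
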